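/- Let D = (E; Φ) be a binary delta-matroid and a, b ∈ E two distinct elements. Then the handle slide D̃_{ab} = (E; Φ Δ {φ ∪ {a} : φ ⊆ E∖{a,b} and φ ∪ {b} ∈ Φ}) is a binary delta-matroid. -/

import Mathlib

open scoped symmDiff

variable {α : Type*} [DecidableEq α]

/-- A (proper) delta-matroid: a nonempty collection `Φ` of subsets of the ground set `E`
satisfying the Symmetric Exchange Axiom. -/
def IsDeltaMatroid (E : Finset α) (Φ : Set (Finset α)) : Prop :=
  Φ.Nonempty ∧ (∀ φ ∈ Φ, φ ⊆ E) ∧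
    ∀ φ₁ ∈ Φ, ∀ φ₂ ∈ Φ, ∀ e ∈ φ₁ ∆ φ₂, ∃ e' ∈ φ₁ ∆ φ₂, φ₁ ∆ ({e, e'} : Finset α) ∈ Φ

/-- The principal submatrix of `A` with rows and columns indexed by `U`. -/
def principalSubmatrix (A : Matrix α α (ZMod 2)) (U : Finset α) :
    Matrix U U (ZMod 2) :=
  A.submatrix (fun i => (i : α)) (fun i => (i : α))

/-- `U` is nondegenerate for `A`: the principal submatrix `A_U` is invertible over `F₂`
(the empty submatrix has determinant `1`, hence is invertible by convention). -/
def Nondeg (A : Matrix α α (ZMod 2)) (U : Finset α) : Prop :=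
  IsUnit (principalSubmatrix A U).det

/-- Twist of a collection of feasible sets by a subset `T`:
`Φ * T = {φ ∆ T : φ ∈ Φ}`. -/
def twist (Φ : Set (Finset α)) (T : Finset α) : Set (Finset α) :=
  {ψ | ∃ φ ∈ Φ, ψ = φ ∆ T}

/-- A binary delta-matroid on ground set `E`: a twist of the nondegeneracy set system of a
symmetric matrix over `F₂` (the matrix is indexed by the ambient type; only its `E × E`
block is ever used, since only principal submatrices `A_U` with `U ⊆ E` occur). -/
def IsBinaryDeltaMatroid (E : Finset α) (Φ : Set (Finset α)) : Prop :=
  ∃ (A : Matrix α α (ZMod 2)) (T : Finset α), A.IsSymm ∧ T ⊆ E ∧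
    Φ = {ψ | ∃ U : Finset α, U ⊆ E ∧ Nondeg A U ∧ ψ = U ∆ T}

/-- Feasible sets of the deletion `D ∖ e`. -/
def delSet (Φ : Set (Finset α)) (e : α) : Set (Finset α) :=
  {φ ∈ Φ | e ∉ φ}

/-- Feasible sets of the contraction `D / e`. -/
def conSet (Φ : Set (Finset α)) (e : α) : Set (Finset α) :=
  {ψ | ∃ φ ∈ Φ, e ∈ φ ∧ ψ = φ.erase e}

/-- Feasible sets of the handle slide (second Vassiliev move) of `a` over `b`:
`Φ ∆ {φ ∪ {a} : φ ⊆ E ∖ {a, b}, φ ∪ {b} ∈ Φ}`. -/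
def slideSet (E : Finset α) (Φ : Set (Finset α)) (a b : α) : Set (Finset α) :=
  Φ ∆ {ψ | ∃ φ : Finset α, φ ⊆ E \ {a, b} ∧ φ ∪ {b} ∈ Φ ∧ ψ = φ ∪ {a}}

/-- Feasible sets of the first Vassiliev move (exchange of handle ends):
`D\'_{ab} = ((D * {b})~_{ab}) * {b}`. -/
def firstMove (E : Finset α) (Φ : Set (Finset α)) (a b : α) : Set (Finset α) :=
  twist (slideSet E (twist Φ {b}) a b) {b}

/-!
If no feasible set contains `b` and avoids `a`, the handle slide of `a` over `b` does nothing.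
Otherwise let `T` be such a set. A principal pivot rewrites `D` as the twist by `T` of the
nondegenerate sets of a symmetric matrix `A`, and then the slide just adds `1` to the entries
`A a b` and `A b a`: in characteristic two this changes the determinant of `A_U`, for
`a, b ∈ U`, by the determinant of `A_{U ∖ {a, b}}`, and twisting by `T` turns the pair
`U`, `U ∖ {a, b}` into the pair `φ ∪ {a}`, `φ ∪ {b}`.
-/

open scoped Matrix

section MixRows

variable {m n R : Type*} [DecidableEq m]

/-- The matrix with the rows of `X` on `s` and the rows of `Y` off `s`. The principal minor of a
square matrix `M` on `s` is then the full determinant of `mixRows s M 1`, which lets minors of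
different sizes be compared by matrix algebra. -/
def mixRows (s : Finset m) (X Y : Matrix m n R) : Matrix m n R :=
  Matrix.of (s.piecewise X.row Y.row)

theorem mixRows_apply (s : Finset m) (X Y : Matrix m n R) (i : m) (j : n) :
    mixRows s X Y i j = if i ∈ s then X i j else Y i j := by
  by_cases hi : i ∈ s <;> simp [mixRows, hi]

theorem mixRows_mixRows (s t : Finset m) (X Y : Matrix m n R) :
    mixRows t (mixRows s Y X) (mixRows s X Y) = mixRows (t ∆ s) X Y := by
  ext i j
  by_cases hs : i ∈ s <;> by_cases ht : i ∈ t <;>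
    simp [mixRows_apply, Finset.mem_symmDiff, hs, ht]

theorem mixRows_mul {l : Type*} [Fintype n] [NonUnitalNonAssocSemiring R] (s : Finset m)
    (X Y : Matrix m n R) (Z : Matrix n l R) :
    mixRows s (X * Z) (Y * Z) = mixRows s X Y * Z := by
  ext i j
  by_cases hi : i ∈ s <;> simp [Matrix.mul_apply, mixRows_apply, hi]

end MixRows

section PrincipalMinors

variable {n R : Type*} [Fintype n] [DecidableEq n] [CommRing R]

theorem det_mixRows_one (s : Finset n) (M : Matrix n n R) :
    (mixRows s M 1).det = (M.submatrix ((↑) : s → n) (↑)).det :=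
  Matrix.det_piecewise_one_eq_submatrix_det M s

/-- The principal pivot transform of `M` at `s`: if `y = M x`, it expresses the vector
`(x on s, y off s)` in terms of `(y on s, x off s)`. It is meaningful only when the principal
submatrix of `M` on `s` is invertible. -/
noncomputable def principalPivot (s : Finset n) (M : Matrix n n R) : Matrix n n R :=
  mixRows s 1 M * (mixRows s M 1)⁻¹

theorem mixRows_principalPivot_one {s : Finset n} {M : Matrix n n R}
    (hs : IsUnit (mixRows s M 1).det) (t : Finset n) :
    mixRows t (principalPivot s M) 1 = mixRows (t ∆ s) M 1 * (mixRows s M 1)⁻¹ :=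
  calc mixRows t (principalPivot s M) 1
      = mixRows t (mixRows s 1 M * (mixRows s M 1)⁻¹) (mixRows s M 1 * (mixRows s M 1)⁻¹) := by
        rw [principalPivot, Matrix.mul_nonsing_inv _ hs]
    _ = mixRows (t ∆ s) M 1 * (mixRows s M 1)⁻¹ := by rw [mixRows_mul, mixRows_mixRows]

theorem isUnit_det_submatrix_principalPivot {s : Finset n} {M : Matrix n n R}
    (hs : IsUnit (M.submatrix ((↑) : s → n) (↑)).det) (t : Finset n) :
    IsUnit ((principalPivot s M).submatrix ((↑) : t → n) (↑)).det ↔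
      IsUnit (M.submatrix ((↑) : ↥(t ∆ s) → n) (↑)).det := by
  simp only [← det_mixRows_one] at hs ⊢
  have hs_inv : IsUnit (mixRows s M 1)⁻¹.det := Matrix.isUnit_nonsing_inv_det _ hs
  rw [mixRows_principalPivot_one hs, Matrix.det_mul, IsUnit.mul_iff, and_iff_left hs_inv]

theorem isSymm_transpose_mixRows_mul_mixRows [CharP R 2] (s : Finset n) {M : Matrix n n R}
    (hM : M.IsSymm) : ((mixRows s M 1)ᵀ * mixRows s 1 M).IsSymm := by
  have entry (j k : n) : ((mixRows s M 1)ᵀ * mixRows s 1 M) j k =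
      (if k ∈ s then M k j else 0) + if j ∈ s then 0 else M j k := by
    have summand (i : n) : mixRows s M 1 i j * mixRows s 1 M i k =
        (if i = k then if i ∈ s then M i j else 0 else 0) +
          if i = j then if i ∈ s then 0 else M i k else 0 := by
      by_cases hi : i ∈ s <;> simp [mixRows_apply, hi, Matrix.one_apply]
    simp [Matrix.mul_apply, summand, Finset.sum_add_distrib]
  refine Matrix.IsSymm.ext fun j k => ?_
  rw [entry, entry, hM.apply]
  by_cases hj : j ∈ s <;> by_cases hk : k ∈ s <;> simp [hj, hk, CharTwo.add_self_eq_zero]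

theorem isSymm_principalPivot [CharP R 2] {s : Finset n} {M : Matrix n n R}
    (hM : M.IsSymm) (hs : IsUnit (M.submatrix ((↑) : s → n) (↑)).det) :
    (principalPivot s M).IsSymm := by
  rw [← det_mixRows_one, ← Matrix.det_transpose] at hs
  have congruence : principalPivot s M =
      (mixRows s M 1)⁻¹ᵀ * ((mixRows s M 1)ᵀ * mixRows s 1 M) * (mixRows s M 1)⁻¹ := by
    rw [Matrix.transpose_nonsing_inv, Matrix.nonsing_inv_mul_cancel_left _ _ hs, principalPivot]
  rw [congruence, Matrix.IsSymm, Matrix.transpose_mul, Matrix.transpose_mul,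
    Matrix.transpose_transpose, (isSymm_transpose_mixRows_mul_mixRows s hM).eq,
    ← Matrix.mul_assoc]

theorem det_updateRow_single_updateRow_single {a b : n} (hab : a ≠ b) (M : Matrix n n R) :
    ((M.updateRow a (Pi.single b 1)).updateRow b (Pi.single a 1)).det =
      -(M.submatrix ((↑) : ↥({a, b}ᶜ : Finset n) → n) (↑)).det := by
  have swap_rows : (M.updateRow a (Pi.single b 1)).updateRow b (Pi.single a 1) =
      (mixRows {a, b}ᶜ M 1).submatrix (Equiv.swap a b) id := by
    ext i j
    rcases eq_or_ne i b with rfl | hib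
    · simp [mixRows_apply, Matrix.one_eq_pi_single]
    rcases eq_or_ne i a with rfl | hia
    · simp [mixRows_apply, Matrix.one_eq_pi_single, hib]
    · simp [mixRows_apply, Equiv.swap_apply_of_ne_of_ne, hia, hib]
  rw [swap_rows, Matrix.det_permute, Equiv.Perm.sign_swap hab, det_mixRows_one]
  simp

theorem det_add_single_add_single {a b : n} (hab : a ≠ b) (M : Matrix n n R) (c d : R) :
    (M + Matrix.single a b c + Matrix.single b a d).det =
      M.det + c * M.adjugate b a + d * M.adjugate a b -
        c * d * (M.submatrix ((↑) : ↥({a, b}ᶜ : Finset n) → n) (↑)).det := by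
  have rows : M + Matrix.single a b c + Matrix.single b a d =
      (M.updateRow a (M.row a + c • Pi.single b 1)).updateRow b
        (M.row b + d • Pi.single a 1) := by
    ext i j
    rcases eq_or_ne i b with rfl | hib
    · simp [Matrix.single_apply, Pi.single_apply, hab, eq_comm]
    rcases eq_or_ne i a with rfl | hia
    · simp [Matrix.single_apply, Pi.single_apply, hib, hib.symm, eq_comm]
    · simp [hia, hib, hia.symm, hib.symm]
  have restore_row {x y : n} (hxy : x ≠ y) (u : n → R) :
      (M.updateRow x u).updateRow y (M.row y) = M.updateRow x u := by
    rw [Matrix.updateRow_comm _ hxy, Matrix.row, Matrix.updateRow_eq_self]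
  have expand_row_a (u : n → R) :
      ((M.updateRow a (M.row a + c • Pi.single b 1)).updateRow b u).det =
        (M.updateRow b u).det + c * ((M.updateRow a (Pi.single b 1)).updateRow b u).det := by
    rw [Matrix.updateRow_comm _ hab, Matrix.det_updateRow_add, Matrix.det_updateRow_smul,
      restore_row hab.symm, Matrix.updateRow_comm _ hab.symm]
  rw [rows, Matrix.det_updateRow_add, Matrix.det_updateRow_smul, expand_row_a, expand_row_a,
    det_updateRow_single_updateRow_single hab, restore_row hab, Matrix.row,
    Matrix.updateRow_eq_self, ← Matrix.adjugate_apply, ← Matrix.adjugate_apply]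
  ring

theorem det_add_single_add_single_of_isSymm [CharP R 2] {a b : n} (hab : a ≠ b)
    {M : Matrix n n R} (hM : M.IsSymm) :
    (M + Matrix.single a b 1 + Matrix.single b a 1).det =
      M.det + (M.submatrix ((↑) : ↥({a, b}ᶜ : Finset n) → n) (↑)).det := by
  rw [det_add_single_add_single hab, hM.adjugate.apply, one_mul, one_mul, one_mul,
    CharTwo.add_cancel_right, CharTwo.sub_eq_add]

end PrincipalMinors

section Nondeg

theorem symmDiff_subset_of_subset_of_subset {s t u : Finset α} (hs : s ⊆ u) (ht : t ⊆ u) :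
    s ∆ t ⊆ u :=
  Finset.symmDiff_subset_union.trans (Finset.union_subset hs ht)

theorem exists_isSymm_principalSubmatrix_eq {ι : Type*} {E : Finset ι}
    {M : Matrix E E (ZMod 2)} (hM : M.IsSymm) :
    ∃ A : Matrix ι ι (ZMod 2), A.IsSymm ∧ principalSubmatrix A E = M := by
  classical
  let e := Equiv.sumCompl (· ∈ E)
  refine ⟨(Matrix.fromBlocks M 0 0 0).submatrix e.symm e.symm,
    (hM.fromBlocks Matrix.transpose_zero Matrix.isSymm_zero).submatrix _, ?_⟩
  ext i j
  simp [e, principalSubmatrix]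

theorem nondeg_iff_isUnit_det_submatrix {E U : Finset α} (hU : U ⊆ E) (A : Matrix α α (ZMod 2)) :
    Nondeg A U ↔ IsUnit ((principalSubmatrix A E).submatrix
      ((↑) : ↥(U.subtype (· ∈ E)) → E) (↑)).det := by
  let e : ↥(U.subtype (· ∈ E)) ≃ U :=
    (Equiv.subtypeEquivRight fun _ => Finset.mem_subtype).trans
      (Equiv.subtypeSubtypeEquivSubtype fun h => hU h)
  rw [Nondeg, ← Matrix.det_submatrix_equiv_self e]
  rfl

theorem exists_nondeg_iff_nondeg_symmDiff {A : Matrix α α (ZMod 2)} (hA : A.IsSymm)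
    {E S : Finset α} (hSE : S ⊆ E) (hS : Nondeg A S) :
    ∃ B : Matrix α α (ZMod 2), B.IsSymm ∧ ∀ U ⊆ E, (Nondeg B U ↔ Nondeg A (U ∆ S)) := by
  rw [nondeg_iff_isUnit_det_submatrix hSE] at hS
  obtain ⟨B, hB, hBE⟩ := exists_isSymm_principalSubmatrix_eq
    (isSymm_principalPivot (hA.submatrix ((↑) : E → α)) hS)
  refine ⟨B, hB, fun U hU => ?_⟩
  have subtype_symmDiff : (U ∆ S).subtype (· ∈ E) = U.subtype (· ∈ E) ∆ S.subtype (· ∈ E) := by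
    ext
    simp [Finset.mem_symmDiff]
  rw [nondeg_iff_isUnit_det_submatrix hU,
    nondeg_iff_isUnit_det_submatrix (symmDiff_subset_of_subset_of_subset hU hSE), hBE,
    subtype_symmDiff, ← isUnit_det_submatrix_principalPivot hS]
  rfl

theorem isUnit_add_iff_xor (x y : ZMod 2) : IsUnit (x + y) ↔ Xor (IsUnit x) (IsUnit y) := by
  simp only [isUnit_iff_ne_zero, xor_iff_not_iff]
  revert x y
  decide

theorem nondeg_add_single_add_single {A : Matrix α α (ZMod 2)} (hA : A.IsSymm) {a b : α}
    (hab : a ≠ b) (U : Finset α) :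
    Nondeg (A + Matrix.single a b 1 + Matrix.single b a 1) U ↔
      Xor (Nondeg A U) (a ∈ U ∧ b ∈ U ∧ Nondeg A (U \ {a, b})) := by
  by_cases hU : a ∈ U ∧ b ∈ U
  · obtain ⟨ha, hb⟩ := hU
    have hAU : (principalSubmatrix A U).IsSymm := hA.submatrix _
    have hab_subtype : (⟨a, ha⟩ : U) ≠ ⟨b, hb⟩ := by simpa using hab
    have restrict : principalSubmatrix (A + Matrix.single a b 1 + Matrix.single b a 1) U =
        principalSubmatrix A U + Matrix.single ⟨a, ha⟩ ⟨b, hb⟩ 1 +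
          Matrix.single ⟨b, hb⟩ ⟨a, ha⟩ 1 := by
      ext i j
      simp [principalSubmatrix, Matrix.single_apply, Subtype.ext_iff]
    have subtype_sdiff : (U \ {a, b}).subtype (· ∈ U) = {⟨a, ha⟩, ⟨b, hb⟩}ᶜ := by
      ext i
      simp [Subtype.ext_iff]
    rw [nondeg_iff_isUnit_det_submatrix Finset.sdiff_subset, subtype_sdiff, Nondeg, restrict,
      det_add_single_add_single_of_isSymm hab_subtype hAU, isUnit_add_iff_xor]
    simp [ha, hb, Nondeg]
  · have unchanged : principalSubmatrix (A + Matrix.single a b 1 + Matrix.single b a 1) U =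
        principalSubmatrix A U := by
      ext i j
      have hij : ¬(a = i ∧ b = j) := fun ⟨ha, hb⟩ => hU ⟨ha ▸ i.2, hb ▸ j.2⟩
      have hji : ¬(b = i ∧ a = j) := fun ⟨hb, ha⟩ => hU ⟨ha ▸ j.2, hb ▸ i.2⟩
      simp [principalSubmatrix, hij, hji]
    have no_exchange : ¬(a ∈ U ∧ b ∈ U ∧ Nondeg A (U \ {a, b})) :=
      fun ⟨ha, hb, _⟩ => hU ⟨ha, hb⟩
    rw [Nondeg, unchanged, ← Nondeg, eq_false no_exchange]
    simp [xor_def]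

end Nondeg

section HandleSlide

variable {E : Finset α} {Φ : Set (Finset α)} {a b : α}

theorem isBinaryDeltaMatroid_iff :
    IsBinaryDeltaMatroid E Φ ↔ ∃ (A : Matrix α α (ZMod 2)) (T : Finset α), A.IsSymm ∧ T ⊆ E ∧
      ∀ ψ, ψ ∈ Φ ↔ ψ ⊆ E ∧ Nondeg A (ψ ∆ T) := by
  refine exists₂_congr fun A T => and_congr_right fun _ => and_congr_right fun hT => ?_
  rw [Set.ext_iff]
  refine forall_congr' fun ψ => iff_congr Iff.rfl ⟨?_, fun ⟨hψ, hA⟩ => ?_⟩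
  · rintro ⟨U, hU, hA, rfl⟩
    exact ⟨symmDiff_subset_of_subset_of_subset hU hT, by rwa [symmDiff_symmDiff_cancel_right]⟩
  · exact ⟨ψ ∆ T, symmDiff_subset_of_subset_of_subset hψ hT, hA,
      (symmDiff_symmDiff_cancel_right T ψ).symm⟩

theorem IsBinaryDeltaMatroid.exists_mem_iff_nondeg_symmDiff (hD : IsBinaryDeltaMatroid E Φ)
    {T : Finset α} (hT : T ∈ Φ) :
    ∃ A : Matrix α α (ZMod 2), A.IsSymm ∧ ∀ ψ, ψ ∈ Φ ↔ ψ ⊆ E ∧ Nondeg A (ψ ∆ T) := by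
  obtain ⟨A, S, hA, hS, hΦ⟩ := isBinaryDeltaMatroid_iff.1 hD
  obtain ⟨hTE, hTA⟩ := (hΦ T).1 hT
  obtain ⟨B, hB, hBA⟩ := exists_nondeg_iff_nondeg_symmDiff hA
    (symmDiff_subset_of_subset_of_subset hTE hS) hTA
  refine ⟨B, hB, fun ψ => (hΦ ψ).trans (and_congr_right fun hψ => ?_)⟩
  rw [hBA _ (symmDiff_subset_of_subset_of_subset hψ hTE), symmDiff_assoc,
    symmDiff_symmDiff_cancel_left]

theorem slideSet_eq_self (hab : a ≠ b) (h : ∀ φ ∈ Φ, b ∈ φ → a ∈ φ) :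
    slideSet E Φ a b = Φ := by
  suffices slid_eq_empty :
      {ψ | ∃ φ : Finset α, φ ⊆ E \ {a, b} ∧ φ ∪ {b} ∈ Φ ∧ ψ = φ ∪ {a}} = ∅ by
    rw [slideSet, slid_eq_empty]
    exact symmDiff_bot Φ
  refine Set.eq_empty_of_forall_notMem ?_
  rintro _ ⟨φ, hφ, hφb, -⟩
  have haφ : a ∈ φ := by simpa [hab] using h _ hφb (by simp)
  simpa using hφ haφ

theorem mem_slideSet_iff (hΦ : ∀ φ ∈ Φ, φ ⊆ E) (hab : a ≠ b) (ψ : Finset α) :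
    ψ ∈ slideSet E Φ a b ↔ Xor (ψ ∈ Φ) (a ∈ ψ ∧ b ∉ ψ ∧ ψ ∆ {a, b} ∈ Φ) := by
  refine iff_of_eq (congrArg (Xor (ψ ∈ Φ)) (propext ⟨?_, fun ⟨_, _, hψ⟩ => ?_⟩))
  · rintro ⟨φ, hφ, hφb, rfl⟩
    have : a ∉ φ := fun h => by simpa using hφ h
    have hbφ : b ∉ φ := fun h => by simpa using hφ h
    have exchange : (φ ∪ {a}) ∆ {a, b} = φ ∪ {b} := by grind [Finset.mem_symmDiff]
    exact ⟨by simp, by simp [hbφ, hab.symm], exchange ▸ hφb⟩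
  · have hψE : ψ ∆ {a, b} ⊆ E := hΦ _ hψ
    have exchange : ψ.erase a ∪ {b} = ψ ∆ {a, b} := by grind [Finset.mem_symmDiff]
    exact ⟨ψ.erase a, by grind, exchange ▸ hψ, by grind⟩

theorem mem_slideSet_iff_nondeg {A : Matrix α α (ZMod 2)} (hA : A.IsSymm) {T : Finset α}
    (hΦ : ∀ ψ, ψ ∈ Φ ↔ ψ ⊆ E ∧ Nondeg A (ψ ∆ T)) (ha : a ∈ E) (hb : b ∈ E) (hab : a ≠ b)
    (haT : a ∉ T) (hbT : b ∈ T) (ψ : Finset α) :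
    ψ ∈ slideSet E Φ a b ↔
      ψ ⊆ E ∧ Nondeg (A + Matrix.single a b 1 + Matrix.single b a 1) (ψ ∆ T) := by
  have haψ : a ∈ ψ ∆ T ↔ a ∈ ψ := by simp [Finset.mem_symmDiff, haT]
  have hbψ : b ∈ ψ ∆ T ↔ b ∉ ψ := by simp [Finset.mem_symmDiff, hbT]
  have pair_subset : {a, b} ⊆ E := by simp [Finset.insert_subset_iff, ha, hb]
  have exchange_subset : ψ ∆ {a, b} ⊆ E ↔ ψ ⊆ E :=
    ⟨fun h => symmDiff_symmDiff_cancel_right {a, b} ψ ▸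
      symmDiff_subset_of_subset_of_subset h pair_subset,
      fun h => symmDiff_subset_of_subset_of_subset h pair_subset⟩
  have exchange (haψ' : a ∈ ψ) (hbψ' : b ∉ ψ) : (ψ ∆ T) \ {a, b} = ψ ∆ {a, b} ∆ T := by
    grind [Finset.mem_symmDiff]
  rw [mem_slideSet_iff (fun φ hφ => ((hΦ φ).1 hφ).1) hab, hΦ, hΦ, exchange_subset,
    nondeg_add_single_add_single hA hab, haψ, hbψ]
  grind

end HandleSlide

/-- Moffatt–Mphako-Banda. The handle slide of a binary delta-matroid at
a pair of distinct elements `a, b` of its ground set is a binary delta-matroid. -/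
theorem handleSlide_isBinaryDeltaMatroid {α : Type*} [DecidableEq α] (E : Finset α)
    (Φ : Set (Finset α)) (a b : α) (ha : a ∈ E) (hb : b ∈ E) (hab : a ≠ b)
    (hD : IsBinaryDeltaMatroid E Φ) :
    IsBinaryDeltaMatroid E (slideSet E Φ a b) := by
  by_cases hT : ∃ T ∈ Φ, b ∈ T ∧ a ∉ T
  · obtain ⟨T, hTΦ, hbT, haT⟩ := hT
    obtain ⟨A, hA, hΦ⟩ := hD.exists_mem_iff_nondeg_symmDiff hTΦ
    have hTE : T ⊆ E := ((hΦ T).1 hTΦ).1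
    have hA_slide : (A + Matrix.single a b 1 + Matrix.single b a 1).IsSymm := by
      rw [add_assoc, ← Matrix.transpose_single a b]
      exact hA.add (Matrix.isSymm_add_transpose_self _)
    exact isBinaryDeltaMatroid_iff.2 ⟨A + Matrix.single a b 1 + Matrix.single b a 1, T, hA_slide,
      hTE, mem_slideSet_iff_nondeg hA hΦ ha hb hab haT hbT⟩
  · push Not at hT
    rwa [slideSet_eq_self hab hT]
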